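/- If M : [0,∞) → [0,∞) is continuous, M(t) > 0 for all t > 0, and there exists γ ≥ 1 such that t·M(t) ≤ γ·𝓜(t) for all t ≥ 0 (where 𝓜(t) = ∫₀ᵗ M(τ)dτ), then 𝓜(t) ≥ 𝓜(1)·t^γ for all t ∈ [0,1]. -/

import Mathlib

open MeasureTheory Set

theorem stmt_0 (M : ℝ → ℝ) (γ : ℝ)
    (hMcont : Continuous M)
    (hMnonneg : ∀ t, 0 ≤ t → 0 ≤ M t)
    (hMpos : ∀ t, 0 < t → 0 < M t)
    (hγ : 1 ≤ γ)
    (hAR : ∀ t, 0 ≤ t → t * M t ≤ γ * ∫ τ in (0:ℝ)..t, M τ) :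
    ∀ t ∈ Icc (0:ℝ) 1,
      (∫ τ in (0:ℝ)..1, M τ) * t ^ γ ≤ ∫ τ in (0:ℝ)..t, M τ := by
  intro t ht
  rcases ht.1.eq_or_lt with h0 | h0
  · subst h0
    rw [Real.zero_rpow (by linarith)]
    simp
  have hd : ∀ x : ℝ, 0 < x → HasDerivAt (fun x : ℝ => (∫ τ in (0:ℝ)..x, M τ) * x ^ (-γ))
      (M x * x ^ (-γ) + (∫ τ in (0:ℝ)..x, M τ) * (-γ * x ^ (-γ - 1))) x := by
    intro x hx
    exact (hMcont.integral_hasStrictDerivAt 0 x).hasDerivAt.mul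
      (Real.hasDerivAt_rpow_const (Or.inl hx.ne'))
  have hanti : AntitoneOn (fun x : ℝ => (∫ τ in (0:ℝ)..x, M τ) * x ^ (-γ)) (Icc t 1) := by
    apply antitoneOn_of_deriv_nonpos (convex_Icc t 1)
    · intro x hx
      exact (hd x (h0.trans_le hx.1)).continuousAt.continuousWithinAt
    · intro x hx
      rw [interior_Icc] at hx
      exact (hd x (h0.trans hx.1)).differentiableAt.differentiableWithinAt
    · intro x hx
      rw [interior_Icc] at hx
      have hx0 : 0 < x := h0.trans hx.1
      rw [(hd x hx0).deriv]
      have e : x ^ (-γ) = x ^ (-γ - 1) * x := by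
        rw [Real.rpow_sub_one hx0.ne']
        field_simp
      have hp : 0 ≤ x ^ (-γ - 1) := Real.rpow_nonneg hx0.le _
      rw [e]
      have := mul_le_mul_of_nonneg_left (hAR x hx0.le) hp
      linarith
  have h := hanti (left_mem_Icc.2 ht.2) (right_mem_Icc.2 ht.2) ht.2
  simp only [Real.one_rpow, mul_one] at h
  have hp : 0 < t ^ γ := Real.rpow_pos_of_pos h0 _
  rw [Real.rpow_neg h0.le, ← div_eq_mul_inv, le_div_iff₀ hp] at h
  exact h
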